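/- arXiv:1006.1532 — 2 statements merged into one kernel-verified Lean document; each statement's English description precedes it below -/
import Mathlib

section
/- Generalized Hill formula: for a periodic linear discrete Lagrangian system with monodromy matrix P (regarded as a complex 2m×2m matrix) and for every ρ ∈ ℂ with ρ ≠ 0, one has ρ^{−m} · det(P − ρ·I_{2m}) = (−1)^m · det(H_ρ) / (∏_{i=1}^n det B_i). -/
open Matrix BigOperators

/-- The transfer matrix `T_i` of a periodic linear discrete Lagrangian system. -/
noncomputable def transferMatrix (m : ℕ) (A B : ℤ → Matrix (Fin m) (Fin m) ℝ) (i : ℤ) :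
    Matrix (Fin m ⊕ Fin m) (Fin m ⊕ Fin m) ℝ :=
  Matrix.fromBlocks 0 1 (-(((B i)ᵀ)⁻¹ * B (i - 1))) (((B i)ᵀ)⁻¹ * A i)

/-- The monodromy matrix `P = T_n ⋯ T_1`. -/
noncomputable def monodromy (m n : ℕ) (A B : ℤ → Matrix (Fin m) (Fin m) ℝ) :
    Matrix (Fin m ⊕ Fin m) (Fin m ⊕ Fin m) ℝ :=
  (List.range n).foldl (fun M i => transferMatrix m A B ((i : ℤ) + 1) * M) 1

/-- The `ρ`-Hessian `H_ρ`: the complex `(mn) × (mn)` matrix acting by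
`(H_ρ u)_i = A_i u_i - B_{i-1} u_{i-1} - B_iᵀ u_{i+1}` with the quasiperiodic
conventions `u_0 = ρ⁻¹ u_n`, `u_{n+1} = ρ u_1`. -/
noncomputable def rhoHessian (m n : ℕ) [NeZero n] (A B : ℤ → Matrix (Fin m) (Fin m) ℝ)
    (ρ : ℂ) : Matrix (Fin n × Fin m) (Fin n × Fin m) ℂ :=
  fun p q =>
    (if q.1 = p.1 then (A ((p.1 : ℕ) : ℤ) p.2 q.2 : ℂ) else 0)
    + (if q.1 = p.1 - 1 then
        -((if (p.1 : ℕ) = 0 then ρ⁻¹ else 1) * (B (((p.1 : ℕ) : ℤ) - 1) p.2 q.2 : ℂ)) else 0)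
    + (if q.1 = p.1 + 1 then
        -((if (p.1 : ℕ) = n - 1 then ρ else 1) * (B ((p.1 : ℕ) : ℤ) q.2 p.2 : ℂ)) else 0)

/-! In the first-order form `z_{i+1} = T_i z_i`, a quasiperiodic solution is a kernel vector of
`1 - S T`, with `S` the cyclic shift carrying the weight `ρ⁻¹` at the wrap-around and `T` the block
diagonal matrix of the `T_i`. Its determinant is computed in two ways. Dropping the wrap-around
block from `S` gives a unitriangular factor of `1 - S T`, and the complementary factor has
determinant `det (1 - ρ⁻¹ T_{n-1} ⋯ T_0)`. On the other hand, regrouping the coordinates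
`(u_{i-1}, u_i)` and taking the Schur complement of the identity block turns `1 - S T` into
`-S D⁻¹ H_ρ`, where `D` is block diagonal with blocks `B_iᵀ`; the factor `S` contributes the sign of
a cyclic permutation and the power of `ρ`, and `D` contributes `∏ det B_i`. Periodicity and
`det (1 - X Y) = det (1 - Y X)` identify `T_{n-1} ⋯ T_0` with `T_n ⋯ T_1` inside the determinant. -/

section Propagator

variable {M N : Type*} [Monoid M] [Monoid N]

/-- The propagator `T_{n-1} ⋯ T_0` of the first-order recursion `z_{i+1} = T_i z_i`, which takes
`z_0` to `z_n`. -/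
def propagator (T : ℕ → M) : ℕ → M
  | 0 => 1
  | n + 1 => T n * propagator T n

@[simp]
theorem propagator_zero (T : ℕ → M) : propagator T 0 = 1 := rfl

theorem propagator_succ (T : ℕ → M) (n : ℕ) :
    propagator T (n + 1) = T n * propagator T n := rfl

theorem propagator_succ' (T : ℕ → M) (n : ℕ) :
    propagator T (n + 1) = propagator (fun i => T (i + 1)) n * T 0 := by
  induction n with
  | zero => simp [propagator_succ]
  | succ n ih => rw [propagator_succ, ih, propagator_succ, mul_assoc]

theorem map_propagator {F : Type*} [FunLike F M N] [MonoidHomClass F M N] (f : F) (T : ℕ → M)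
    (n : ℕ) :
    f (propagator T n) = propagator (fun i => f (T i)) n := by
  induction n with
  | zero => simp
  | succ n ih => simp [propagator_succ, ih]

end Propagator

section BlockDeterminants

theorem submatrix_comp_fromBlocks {I J K K' L L' R : Type*} (A : Matrix I J (Matrix K L R))
    (B : Matrix I J (Matrix K L' R)) (C : Matrix I J (Matrix K' L R))
    (D : Matrix I J (Matrix K' L' R)) :
    (comp I J (K ⊕ K') (L ⊕ L') R
        (of fun i j => fromBlocks (A i j) (B i j) (C i j) (D i j))).submatrix
        (Equiv.prodSumDistrib I K K').symm (Equiv.prodSumDistrib J L L').symm =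
      fromBlocks (comp I J K L R A) (comp I J K L' R B) (comp I J K' L R C)
        (comp I J K' L' R D) := by
  ext (p | p) (q | q) <;> rfl

variable {I ι R : Type*} [Fintype I] [Fintype ι] [DecidableEq ι] [CommRing R]

theorem det_comp_of_isUpperTriangular [LinearOrder I] {M : Matrix I I (Matrix ι ι R)}
    (hM : M.IsUpperTriangular) : (comp I I ι ι R M).det = ∏ i, (M i i).det := by
  have hcomp : (comp I I ι ι R M).BlockTriangular Prod.fst := fun p q hpq => by
    rw [comp_apply, hM hpq, Matrix.zero_apply]
  rw [hcomp.det_fintype]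
  refine Finset.prod_congr rfl fun k _ => ?_
  let e : ι ≃ {p : I × ι // p.1 = k} :=
    { toFun := fun x => ⟨(k, x), rfl⟩
      invFun := fun p => p.1.2
      left_inv := fun _ => rfl
      right_inv := by rintro ⟨⟨_, _⟩, rfl⟩; rfl }
  exact (det_submatrix_equiv_self e _).symm

theorem det_comp_of_isLowerTriangular [LinearOrder I] {M : Matrix I I (Matrix ι ι R)}
    (hM : M.IsLowerTriangular) : (comp I I ι ι R M).det = ∏ i, (M i i).det := by
  have hMt : (Mᵀ.map (·ᵀ)).IsUpperTriangular := fun i j hij => by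
    rw [map_apply, transpose_apply, hM hij, transpose_zero]
  rw [← det_transpose, transpose_comp, det_comp_of_isUpperTriangular hMt]
  simp

theorem det_comp_diagonal [DecidableEq I] (d : I → Matrix ι ι R) :
    (comp I I ι ι R (diagonal d)).det = ∏ i, (d i).det := by
  have hswap : comp I I ι ι R (diagonal d) =
      (blockDiagonal d).submatrix (Equiv.prodComm I ι) (Equiv.prodComm I ι) := by
    ext ⟨i, x⟩ ⟨j, y⟩
    rcases eq_or_ne i j with rfl | h <;> simp [blockDiagonal_apply, *]
  rw [hswap, det_submatrix_equiv_self, det_blockDiagonal]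

theorem det_comp_mul (M N : Matrix I I (Matrix ι ι R)) [DecidableEq I] :
    (comp I I ι ι R (M * N)).det = (comp I I ι ι R M).det * (comp I I ι ι R N).det := by
  rw [← det_mul]
  exact congrArg det (map_mul (compRingEquiv I ι R) M N)

theorem det_comp_permMatrix [DecidableEq I] (σ : Equiv.Perm I) :
    (comp I I ι ι R (σ.permMatrix (Matrix ι ι R))).det =
      (Equiv.Perm.sign σ : R) ^ Fintype.card ι := by
  have hkron : comp I I ι ι R (σ.permMatrix (Matrix ι ι R)) =
      kroneckerMap (· * ·) (σ.permMatrix R) (1 : Matrix ι ι R) := by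
    ext ⟨i, x⟩ ⟨j, y⟩
    by_cases h : σ i = j <;> simp [PEquiv.toMatrix_apply, h]
  rw [hkron, det_kronecker, det_permutation, det_one, one_pow, mul_one]

theorem det_comp_fromBlocks_one₁₁ [DecidableEq I] (B C D : Matrix I I (Matrix ι ι R)) :
    (comp I I (ι ⊕ ι) (ι ⊕ ι) R (of fun i j =>
        fromBlocks ((1 : Matrix I I (Matrix ι ι R)) i j) (B i j) (C i j) (D i j))).det =
      (comp I I ι ι R (D - C * B)).det := by
  rw [← det_submatrix_equiv_self (Equiv.prodSumDistrib I ι ι).symm, submatrix_comp_fromBlocks,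
    comp_one, det_fromBlocks_one₁₁]
  exact congrArg det (by simp only [← compRingEquiv_apply, map_sub, map_mul])

end BlockDeterminants

section SmulOne

variable {ι R : Type*} [Fintype ι] [DecidableEq ι] [CommRing R]

theorem det_sub_smul_one (P : Matrix ι ι R) (ρ : Rˣ) :
    (P - ρ • (1 : Matrix ι ι R)).det =
      (-(ρ : R)) ^ Fintype.card ι * (1 - ρ⁻¹ • P).det := by
  rw [← det_smul]
  congr 1
  rw [neg_smul, smul_sub, ← Units.smul_def, ← Units.smul_def, smul_inv_smul, neg_sub]

theorem det_one_sub_smul_propagator_shift {T : ℕ → Matrix ι ι R} {n : ℕ} (hT : T n = T 0)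
    {c : Rˣ} : (1 - c • propagator (fun i => T (i + 1)) n).det = (1 - c • propagator T n).det := by
  cases n with
  | zero => simp
  | succ n =>
    rw [propagator_succ, propagator_succ', hT, ← mul_smul_comm, det_one_sub_mul_comm,
      smul_mul_assoc]

end SmulOne

section CyclicShift

variable {n : ℕ} {α : Type*} [Ring α]

/-- The matrix of the cyclic shift `(u_i) ↦ (u_{i-1})` on `n`-tuples extended quasiperiodically by
`u_{-1} = c u_{n-1}`. Its transpose is the forward shift with `u_n = c u_0`. -/
def cyclicShift (n : ℕ) [NeZero n] (c : α) : Matrix (Fin n) (Fin n) α :=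
  of fun i j => if j = i - 1 then if i = 0 then c else 1 else 0

theorem cyclicShift_mul_apply [NeZero n] (c : α) (M : Matrix (Fin n) (Fin n) α) (i j : Fin n) :
    (cyclicShift n c * M) i j = (if i = 0 then c else 1) * M (i - 1) j := by
  simp [cyclicShift, mul_apply]

theorem cyclicShift_mul_apply_zero (c : α) (M : Matrix (Fin (n + 1)) (Fin (n + 1)) α)
    (j : Fin (n + 1)) : (cyclicShift (n + 1) c * M) 0 j = c * M (Fin.last n) j := by
  rw [cyclicShift_mul_apply, if_pos rfl, zero_sub, ← Fin.neg_last, neg_neg]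

theorem cyclicShift_mul_apply_succ (c : α) (M : Matrix (Fin (n + 1)) (Fin (n + 1)) α)
    (i : Fin n) (j : Fin (n + 1)) : (cyclicShift (n + 1) c * M) i.succ j = M i.castSucc j := by
  rw [cyclicShift_mul_apply, if_neg i.succ_ne_zero, one_mul, ← Fin.coeSucc_eq_succ,
    add_sub_cancel_right]

theorem cyclicShift_mul_transpose [NeZero n] {c c' : α} (h : c * c' = 1) :
    cyclicShift n c * (cyclicShift n c')ᵀ = 1 := by
  ext i j
  rw [cyclicShift_mul_apply, transpose_apply]
  rcases eq_or_ne i j with rfl | hij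
  · by_cases hi : i = 0 <;> simp [cyclicShift, hi, h]
  · simp [cyclicShift, hij]

theorem cyclicShift_eq_diagonal_mul_permMatrix [NeZero n] (c : α) :
    cyclicShift n c =
      diagonal (fun i => if i = 0 then c else 1) * ((finRotate n)⁻¹).permMatrix α := by
  ext i j
  simp [cyclicShift, PEquiv.toMatrix_apply, Equiv.Perm.inv_def, finRotate_symm_apply, eq_comm]

variable {ι R : Type*} [Fintype ι] [DecidableEq ι] [CommRing R]

theorem det_comp_cyclicShift (n : ℕ) (C : Matrix ι ι R) :
    (comp _ _ ι ι R (cyclicShift (n + 1) C)).det = ((-1) ^ n) ^ Fintype.card ι * C.det := by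
  rw [cyclicShift_eq_diagonal_mul_permMatrix, det_comp_mul, det_comp_diagonal, det_comp_permMatrix,
    Equiv.Perm.sign_inv, sign_finRotate, Fin.prod_univ_succ]
  simp [Fin.succ_ne_zero, mul_comm]

/-- The last column of `(1 - cyclicShift 0 * diagonal T)⁻¹ * cyclicShift c * diagonal T` consists of
propagators, so splitting off the wrap-around block leaves a triangular factor. -/
theorem one_sub_cyclicShift_mul_diagonal (T : ℕ → α) (c : α) :
    1 - cyclicShift (n + 1) c * diagonal (fun i : Fin (n + 1) => T i) =
      (1 - cyclicShift (n + 1) 0 * diagonal (fun i : Fin (n + 1) => T i)) *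
        (1 - of fun i j : Fin (n + 1) =>
          if j = Fin.last n then propagator T i * (c * T n) else 0) := by
  rw [mul_sub, mul_one, sub_mul, one_mul, mul_assoc, sub_sub, sub_right_inj]
  ext i j
  simp only [Matrix.add_apply, Matrix.sub_apply]
  cases i using Fin.cases with
  | zero =>
    rcases eq_or_ne j (Fin.last n) with rfl | hj
    · simp [cyclicShift_mul_apply_zero, -mul_diagonal]
    · simp [cyclicShift_mul_apply_zero, -mul_diagonal, hj, hj.symm]
  | succ i => simp [cyclicShift_mul_apply_succ, -mul_diagonal, propagator_succ, mul_assoc]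

theorem det_comp_one_sub_cyclicShift_zero_mul_diagonal (D : Fin (n + 1) → Matrix ι ι R) :
    (comp _ _ ι ι R (1 - cyclicShift (n + 1) 0 * diagonal D)).det = 1 := by
  have hzero (i j : Fin (n + 1)) (hij : i ≤ j) :
      ((cyclicShift (n + 1) 0 : Matrix _ _ (Matrix ι ι R)) * diagonal D) i j = 0 := by
    cases i using Fin.cases with
    | zero => rw [cyclicShift_mul_apply_zero, zero_mul]
    | succ i =>
      rw [cyclicShift_mul_apply_succ, diagonal_apply_ne _ (Fin.castSucc_lt_iff_succ_le.2 hij).ne]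
  have hlower : (1 - cyclicShift (n + 1) 0 * diagonal D).IsLowerTriangular :=
    fun i j (hij : i < j) => by
      rw [Matrix.sub_apply, one_apply_ne hij.ne, hzero i j hij.le, sub_zero]
  rw [det_comp_of_isLowerTriangular hlower]
  refine Finset.prod_eq_one fun i _ => ?_
  rw [Matrix.sub_apply, one_apply_eq, hzero i i le_rfl, sub_zero, det_one]

theorem det_comp_one_sub_cyclicShift_mul_diagonal (n : ℕ) (T : ℕ → Matrix ι ι R)
    (C : Matrix ι ι R) :
    (comp _ _ ι ι R
        (1 - cyclicShift (n + 1) C * diagonal (fun i : Fin (n + 1) => T i))).det =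
      (1 - C * propagator T (n + 1)).det := by
  have hupper : (1 - of fun i j : Fin (n + 1) =>
      if j = Fin.last n then propagator T i * (C * T n) else 0).IsUpperTriangular :=
    fun i j (hij : j < i) => by
      simp [one_apply_ne hij.ne', (hij.trans_le (Fin.le_last i)).ne]
  rw [one_sub_cyclicShift_mul_diagonal, det_comp_mul,
    det_comp_one_sub_cyclicShift_zero_mul_diagonal, one_mul, det_comp_of_isUpperTriangular hupper,
    Fin.prod_univ_castSucc, propagator_succ, ← mul_assoc, det_one_sub_mul_comm]
  simp [(Fin.castSucc_lt_last _).ne]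

end CyclicShift

section FloquetHessian

variable {ι R : Type*} [Fintype ι] [DecidableEq ι] [CommRing R]

/-- The first-order form `(u_{i-1}, u_i) ↦ (u_i, u_{i+1})` of the recursion
`a u_i - b u_{i-1} - d u_{i+1} = 0`. -/
noncomputable def stepMatrix (a b d : Matrix ι ι R) : Matrix (ι ⊕ ι) (ι ⊕ ι) R :=
  fromBlocks 0 1 (-(d⁻¹ * b)) (d⁻¹ * a)

/-- The block matrix of `u ↦ (a_i u_i - b_i u_{i-1} - d_i u_{i+1})_i` on sequences satisfying the
Floquet condition `u_{i+n} = ρ u_i`. -/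
def floquetHessian (n : ℕ) [NeZero n] (a b d : ℕ → Matrix ι ι R) (ρ : Rˣ) :
    Matrix (Fin n) (Fin n) (Matrix ι ι R) :=
  diagonal (fun i : Fin n => a i)
    - diagonal (fun i : Fin n => b i) * cyclicShift n (ρ⁻¹ • 1)
    - diagonal (fun i : Fin n => d i) * (cyclicShift n (ρ • 1))ᵀ

theorem floquetHessian_apply {n : ℕ} [NeZero n] (a b d : ℕ → Matrix ι ι R) (ρ : Rˣ)
    (i j : Fin n) :
    floquetHessian n a b d ρ i j =
      (if j = i then a i else 0) +
        (if j = i - 1 then -((if i = 0 then ρ⁻¹ else 1) • b i) else 0) +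
        (if j = i + 1 then -((if i + 1 = 0 then ρ else 1) • d i) else 0) := by
  have hj : i = j - 1 ↔ j = i + 1 := by rw [eq_sub_iff_add_eq, eq_comm]
  simp only [floquetHessian, cyclicShift, Matrix.sub_apply, diagonal_mul, transpose_apply,
    of_apply, diagonal_apply, hj, eq_comm (a := i) (b := j)]
  rw [sub_eq_add_neg, sub_eq_add_neg]
  congr 1
  · congr 1
    split_ifs <;> simp
  · split_ifs <;> simp_all

theorem det_comp_one_sub_cyclicShift_mul_diagonal_fromBlocks (n : ℕ) [NeZero n] (c : Rˣ)
    (p q : Fin n → Matrix ι ι R) :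
    (comp _ _ (ι ⊕ ι) (ι ⊕ ι) R
        (1 - cyclicShift n (c • 1) * diagonal (fun i => fromBlocks 0 1 (p i) (q i)))).det =
      (comp _ _ ι ι R (1 - cyclicShift n (c • 1) * diagonal q
        - cyclicShift n (c • 1) * diagonal p * cyclicShift n (c • 1))).det := by
  set S : Matrix (Fin n) (Fin n) (Matrix ι ι R) := cyclicShift n (c • 1) with hS
  have hblocks : 1 - cyclicShift n (c • 1) * diagonal (fun i => fromBlocks 0 1 (p i) (q i)) =
      of fun i j => fromBlocks ((1 : Matrix _ _ (Matrix ι ι R)) i j) ((-S) i j)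
        ((-(S * diagonal p)) i j) ((1 - S * diagonal q) i j) := by
    ext1 i j
    have hone : (1 : Matrix (Fin n) (Fin n) (Matrix (ι ⊕ ι) (ι ⊕ ι) R)) i j =
        fromBlocks ((1 : Matrix _ _ (Matrix ι ι R)) i j) 0 0
          ((1 : Matrix _ _ (Matrix ι ι R)) i j) := by
      rcases eq_or_ne i j with rfl | hij <;> simp [*]
    have hshift : (cyclicShift n (c • 1) : Matrix (Fin n) (Fin n) (Matrix (ι ⊕ ι) (ι ⊕ ι) R)) i j =
        fromBlocks (S i j) 0 0 (S i j) := by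
      simp only [hS, cyclicShift, of_apply]
      split_ifs
      · simp [Units.smul_def, ← fromBlocks_one, fromBlocks_smul]
      · exact fromBlocks_one.symm
      · exact fromBlocks_zero.symm
    rw [Matrix.sub_apply, mul_diagonal, hone, hshift, fromBlocks_multiply, sub_eq_add_neg,
      fromBlocks_neg, fromBlocks_add]
    simp [sub_eq_add_neg]
  rw [hblocks, det_comp_fromBlocks_one₁₁, neg_mul_neg]

theorem cyclicShift_mul_diagonal_inv_mul_floquetHessian {n : ℕ} [NeZero n]
    {a b d : ℕ → Matrix ι ι R} (hd : ∀ i, IsUnit (d i).det) (ρ : Rˣ) :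
    cyclicShift n (ρ⁻¹ • 1) * diagonal (fun i : Fin n => -(d i)⁻¹) * floquetHessian n a b d ρ =
      1 - cyclicShift n (ρ⁻¹ • 1) * diagonal (fun i : Fin n => (d i)⁻¹ * a i)
        - cyclicShift n (ρ⁻¹ • 1) * diagonal (fun i : Fin n => -((d i)⁻¹ * b i)) *
          cyclicShift n (ρ⁻¹ • 1) := by
  have hinv : cyclicShift n (ρ⁻¹ • (1 : Matrix ι ι R)) * (cyclicShift n (ρ • 1))ᵀ = 1 :=
    cyclicShift_mul_transpose (by simp)
  have hd_inv : (diagonal fun i : Fin n => -(d i)⁻¹) * diagonal (fun i : Fin n => d i) = -1 := by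
    simp [nonsing_inv_mul _ (hd _), ← diagonal_neg]
  rw [floquetHessian]
  generalize cyclicShift n (ρ⁻¹ • (1 : Matrix ι ι R)) = S at *
  generalize (cyclicShift n (ρ • (1 : Matrix ι ι R)))ᵀ = S' at *
  calc S * diagonal (fun i : Fin n => -(d i)⁻¹) * (diagonal (fun i : Fin n => a i)
          - diagonal (fun i : Fin n => b i) * S
          - diagonal (fun i : Fin n => d i) * S')
      = S * (diagonal (fun i : Fin n => -(d i)⁻¹) * diagonal (fun i : Fin n => a i))
          - S * (diagonal (fun i : Fin n => -(d i)⁻¹) * diagonal (fun i : Fin n => b i)) * S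
          - S * (diagonal (fun i : Fin n => -(d i)⁻¹) * diagonal (fun i : Fin n => d i)) *
            S' := by noncomm_ring
    _ = _ := by
      rw [hd_inv, diagonal_mul_diagonal, diagonal_mul_diagonal]
      simp only [neg_mul, ← diagonal_neg, mul_neg, mul_one, hinv]
      abel

theorem det_comp_floquetHessian (n : ℕ) {a b d : ℕ → Matrix ι ι R}
    (hd : ∀ i, IsUnit (d i).det) (ρ : Rˣ) :
    (∏ i : Fin (n + 1), (d i).det) *
        (1 - ρ⁻¹ • propagator (fun i => stepMatrix (a i) (b i) (d i)) (n + 1)).det =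
      (-((ρ⁻¹ : Rˣ) : R)) ^ Fintype.card ι *
        (comp _ _ ι ι R (floquetHessian (n + 1) a b d ρ)).det := by
  have hprod : (∏ i : Fin (n + 1), (d i).det) * ∏ i : Fin (n + 1), (-(d i)⁻¹).det =
      ((-1) ^ Fintype.card ι) ^ (n + 1) := by
    simp only [← Finset.prod_mul_distrib, ← det_mul, mul_neg, mul_nonsing_inv _ (hd _)]
    simp [det_neg]
  have hsign : ((-1 : R) ^ n) ^ Fintype.card ι * ((-1) ^ Fintype.card ι) ^ (n + 1) =
      (-1) ^ Fintype.card ι := by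
    rw [pow_right_comm, pow_succ, ← mul_assoc, ← mul_pow, ← mul_pow]
    simp
  have hdet : (1 - ρ⁻¹ • propagator (fun i => stepMatrix (a i) (b i) (d i)) (n + 1)).det =
      ((-1) ^ n) ^ Fintype.card ι * ((ρ⁻¹ : Rˣ) : R) ^ Fintype.card ι *
        (∏ i : Fin (n + 1), (-(d i)⁻¹).det) *
          (comp _ _ ι ι R (floquetHessian (n + 1) a b d ρ)).det := by
    rw [← smul_one_mul, ← det_comp_one_sub_cyclicShift_mul_diagonal]
    simp only [stepMatrix]
    rw [det_comp_one_sub_cyclicShift_mul_diagonal_fromBlocks,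
      ← cyclicShift_mul_diagonal_inv_mul_floquetHessian hd, det_comp_mul, det_comp_mul,
      det_comp_cyclicShift, det_comp_diagonal, Units.smul_def, det_smul, det_one, mul_one]
  rw [hdet, neg_pow ((ρ⁻¹ : Rˣ) : R), ← hsign, ← hprod]
  ac_rfl

end FloquetHessian

section BaseChange

variable {ι R S : Type*} [Fintype ι] [DecidableEq ι] [CommRing R] [CommRing S]

theorem map_nonsing_inv_of_isUnit_det (f : R →+* S) {M : Matrix ι ι R} (hM : IsUnit M.det) :
    M⁻¹.map f = (M.map f)⁻¹ := by
  refine (inv_eq_left_inv ?_).symm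
  rw [← Matrix.map_mul, nonsing_inv_mul M hM, Matrix.map_one f f.map_zero f.map_one]

theorem map_stepMatrix (f : R →+* S) (a b : Matrix ι ι R) {d : Matrix ι ι R}
    (hd : IsUnit d.det) :
    (stepMatrix a b d).map f = stepMatrix (a.map f) (b.map f) (d.map f) := by
  simp [stepMatrix, fromBlocks_map, Matrix.map_mul, Matrix.map_neg,
    map_nonsing_inv_of_isUnit_det f hd]

theorem map_propagator_matrix (f : R →+* S) (T : ℕ → Matrix ι ι R) (n : ℕ) :
    (propagator T n).map f = propagator (fun i => (T i).map f) n :=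
  map_propagator f.mapMatrix T n

end BaseChange

section DiscreteLagrangian

variable {m n : ℕ} {A B : ℤ → Matrix (Fin m) (Fin m) ℝ}

theorem transferMatrix_add_period (hA : ∀ i, A (i + n) = A i) (hB : ∀ i, B (i + n) = B i)
    (i : ℤ) : transferMatrix m A B (i + n) = transferMatrix m A B i := by
  rw [transferMatrix, transferMatrix, hA, hB, add_sub_right_comm, hB]

theorem map_transferMatrix (hB : ∀ i, IsUnit (B i).det) (i : ℤ) :
    (transferMatrix m A B i).map Complex.ofRealHom =
      stepMatrix ((A i).map Complex.ofRealHom) ((B (i - 1)).map Complex.ofRealHom)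
        ((B i)ᵀ.map Complex.ofRealHom) :=
  map_stepMatrix Complex.ofRealHom (A i) (B (i - 1)) (isUnit_det_transpose (B i) (hB i))

theorem monodromy_eq_propagator (m n : ℕ) (A B : ℤ → Matrix (Fin m) (Fin m) ℝ) :
    monodromy m n A B = propagator (fun i => transferMatrix m A B (i + 1 : ℕ)) n := by
  induction n with
  | zero => simp [monodromy]
  | succ n ih =>
    rw [propagator_succ, ← ih]
    simp [monodromy, List.range_succ]

theorem det_map_monodromy_sub_smul_one (hA : ∀ i, A (i + n) = A i) (hB : ∀ i, B (i + n) = B i)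
    (ρ : ℂˣ) :
    ((monodromy m n A B).map Complex.ofRealHom - ρ • 1).det =
      (ρ : ℂ) ^ (2 * m) *
        (1 - ρ⁻¹ • (propagator (fun i => transferMatrix m A B i) n).map Complex.ofRealHom).det := by
  let T (i : ℕ) := (transferMatrix m A B i).map Complex.ofRealHom
  have hT : T n = T 0 := congrArg (Matrix.map · Complex.ofRealHom)
    (by simpa using transferMatrix_add_period hA hB 0)
  rw [monodromy_eq_propagator, map_propagator_matrix, map_propagator_matrix, det_sub_smul_one,
    det_one_sub_smul_propagator_shift (T := T) hT]
  simp [T, ← two_mul, Even.neg_pow]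

theorem rhoHessian_eq_comp_floquetHessian [NeZero n] (ρ : ℂˣ) :
    rhoHessian m n A B ρ =
      comp _ _ _ _ ℂ (floquetHessian n (fun i => (A i).map Complex.ofRealHom)
        (fun i => (B (i - 1)).map Complex.ofRealHom)
        (fun i => (B i)ᵀ.map Complex.ofRealHom) ρ) := by
  have hlast (i : Fin n) : (i : ℕ) = n - 1 ↔ i + 1 = 0 := by
    obtain ⟨n, rfl⟩ := Nat.exists_eq_add_one_of_ne_zero (NeZero.ne n)
    rw [add_eq_zero_iff_eq_neg, ← Fin.neg_last, neg_neg, Fin.ext_iff, Fin.val_last,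
      Nat.add_sub_cancel]
  ext ⟨i, x⟩ ⟨j, y⟩
  simp only [rhoHessian, hlast, Fin.val_eq_zero_iff, comp_apply, floquetHessian_apply,
    Matrix.add_apply]
  congr 1
  · congr 1 <;> split_ifs <;> simp [Units.smul_def]
  · split_ifs <;> simp [Units.smul_def]

theorem prod_det_mul_det_one_sub_map_propagator_transferMatrix [NeZero n]
    (hB : ∀ i, IsUnit (B i).det) (ρ : ℂˣ) :
    (∏ i : Fin n, ((B i).det : ℂ)) *
        (1 - ρ⁻¹ • (propagator (fun i => transferMatrix m A B i) n).map Complex.ofRealHom).det =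
      (-(ρ : ℂ)⁻¹) ^ m * (rhoHessian m n A B ρ).det := by
  obtain ⟨n, rfl⟩ := Nat.exists_eq_add_one_of_ne_zero (NeZero.ne n)
  have hdet (i : ℕ) : ((B i)ᵀ.map Complex.ofRealHom).det = ((B i).det : ℂ) := by
    rw [← RingHom.mapMatrix_apply, ← RingHom.map_det, det_transpose, Complex.ofRealHom_eq_coe]
  have hunit (i : ℕ) : IsUnit ((B i)ᵀ.map Complex.ofRealHom).det :=
    hdet i ▸ (hB i).map Complex.ofRealHom
  rw [rhoHessian_eq_comp_floquetHessian, map_propagator_matrix]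
  simpa only [map_transferMatrix hB, hdet, Fintype.card_fin, Units.val_inv_eq_inv_val] using
    det_comp_floquetHessian n (a := fun i => (A i).map Complex.ofRealHom)
      (b := fun i => (B (i - 1)).map Complex.ofRealHom) hunit ρ

end DiscreteLagrangian

theorem generalized_hill_formula_general (m n : ℕ) [NeZero n]
    (A B : ℤ → Matrix (Fin m) (Fin m) ℝ)
    (hAper : ∀ i, A (i + n) = A i) (hBper : ∀ i, B (i + n) = B i)
    (hBinv : ∀ i, IsUnit (B i).det) (ρ : ℂ) (hρ : ρ ≠ 0) :
    ρ ^ (-(m : ℤ)) * ((monodromy m n A B).map (Complex.ofReal) - ρ • 1).det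
      = (-1 : ℂ) ^ m * (rhoHessian m n A B ρ).det
          / ∏ i : Fin n, ((B ((i : ℕ) : ℤ)).det : ℂ) := by
  lift ρ to ℂˣ using hρ.isUnit
  have hP := det_map_monodromy_sub_smul_one hAper hBper ρ
  have hH := prod_det_mul_det_one_sub_map_propagator_transferMatrix (n := n) (A := A) hBinv ρ
  have hprod : ∏ i : Fin n, ((B i).det : ℂ) ≠ 0 :=
    Finset.prod_ne_zero_iff.2 fun i _ => Complex.ofReal_ne_zero.2 (hBinv i).ne_zero
  rw [eq_div_iff hprod]
  calc (ρ : ℂ) ^ (-(m : ℤ)) * ((monodromy m n A B).map Complex.ofReal - (ρ : ℂ) • 1).det *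
        ∏ i : Fin n, ((B i).det : ℂ)
      = (ρ : ℂ) ^ (-(m : ℤ)) * ((ρ : ℂ) ^ (2 * m) *
          ((-(ρ : ℂ)⁻¹) ^ m * (rhoHessian m n A B ρ).det)) := by
        rw [← hH, mul_left_comm (_ ^ (2 * m)), ← hP, mul_comm (∏ i : Fin n, _), mul_assoc]
        rfl
    _ = (-1) ^ m * (rhoHessian m n A B ρ).det := by
        rw [neg_pow, _root_.zpow_neg, zpow_natCast, two_mul, pow_add, inv_pow]
        field_simp

/-- **Generalized Hill formula**: for every `ρ ≠ 0`,
`ρ^{-m} det(P - ρ I) = (-1)^m · det H_ρ / ∏_{i=1}^n det B_i`. -/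
theorem generalized_hill_formula (m n : ℕ) (hm : 0 < m) [NeZero n]
    (A B : ℤ → Matrix (Fin m) (Fin m) ℝ)
    (hAper : ∀ i, A (i + n) = A i) (hBper : ∀ i, B (i + n) = B i)
    (hAsym : ∀ i, (A i)ᵀ = A i) (hBinv : ∀ i, IsUnit (B i).det)
    (ρ : ℂ) (hρ : ρ ≠ 0) :
    ρ ^ (-(m : ℤ)) * ((monodromy m n A B).map (Complex.ofReal) - ρ • 1).det
      = (-1 : ℂ) ^ m * (rhoHessian m n A B ρ).det
          / ∏ i : Fin n, ((B ((i : ℕ) : ℤ)).det : ℂ) :=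
  generalized_hill_formula_general m n A B hAper hBper hBinv ρ hρ
end

section
/- For a periodic linear discrete Lagrangian system, the ρ-Hessian at ρ = −1, H_{−1}, is a real symmetric matrix; if H_{−1} is invertible and σ · (−1)^{ind(H_{−1})} < 0, where σ = sign(∏_{i=1}^n det B_i), then the monodromy matrix P has a real eigenvalue ρ < −1. -/
open Matrix BigOperators

/-- The `ρ`-Hessian at `ρ = -1`: the `(mn) × (mn)` real matrix acting by
`(H₋₁ u)_i = A_i u_i - B_{i-1} u_{i-1} - B_iᵀ u_{i+1}` with the antiperiodic
conventions `u_0 = -u_n`, `u_{n+1} = -u_1`. -/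
noncomputable def hessianNeg (m n : ℕ) [NeZero n] (A B : ℤ → Matrix (Fin m) (Fin m) ℝ) :
    Matrix (Fin n × Fin m) (Fin n × Fin m) ℝ :=
  fun p q =>
    (if q.1 = p.1 then A ((p.1 : ℕ) : ℤ) p.2 q.2 else 0)
    + (if q.1 = p.1 - 1 then
        -((if (p.1 : ℕ) = 0 then (-1 : ℝ) else 1) * B (((p.1 : ℕ) : ℤ) - 1) p.2 q.2) else 0)
    + (if q.1 = p.1 + 1 then
        -((if (p.1 : ℕ) = n - 1 then (-1 : ℝ) else 1) * B ((p.1 : ℕ) : ℤ) q.2 p.2) else 0)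

/-- The (Morse) index of a real symmetric matrix: the number of its negative
eigenvalues counted with multiplicity, equivalently the maximal dimension of a
subspace on which the associated quadratic form is negative definite. -/
noncomputable def matIndex {N : Type*} [Fintype N] (Q : Matrix N N ℝ) : ℕ :=
  sSup {d : ℕ | ∃ W : Submodule ℝ (N → ℝ), Module.finrank ℝ W = d ∧
    ∀ x ∈ W, x ≠ 0 → x ⬝ᵥ Q *ᵥ x < 0}

/-!
The equation `H₋₁ u = 0` is the first-order system `x_k = T_k x_{k-1}` closed up by the antiperiodic
condition `x_n = -x_0`. Eliminating the unknowns of this cyclic system in two ways, block row by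
block row or position by position, gives Hill's formula `∏ det B_i * det (P + 1) = det H₋₁`. Since
`det H₋₁` has the sign `(-1) ^ ind H₋₁`, the hypothesis says that `det (P + 1) < 0`; but
`det (P - t)` tends to `+∞` as `t → -∞`, so it vanishes at some `t < -1`.
-/

section BlockMatrices

variable {K I J L : Type*} [CommRing K] [Fintype I] [DecidableEq I] [Fintype J] [DecidableEq J]
  [Fintype L] [DecidableEq L]

theorem det_comp_of_blockTriangular {α : Type*} [LinearOrder α] (b : I ≃ α)
    {M : Matrix I I (Matrix J J K)} (hM : M.BlockTriangular b) :
    (comp I I J J K M).det = ∏ i, (M i i).det := by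
  have : Fintype α := .ofEquiv I b
  rw [hM.comp.det_fintype, ← b.prod_comp]
  refine Finset.prod_congr rfl fun i _ => ?_
  let e : J ≃ {p : I × J // b p.1 = b i} :=
    { toFun := fun j => ⟨(i, j), rfl⟩
      invFun := fun p => p.1.2
      left_inv := fun _ => rfl
      right_inv := fun ⟨⟨_, _⟩, hp⟩ => Subtype.ext (Prod.ext (b.injective hp).symm rfl) }
  exact (det_submatrix_equiv_self e _).symm

theorem det_comp_eq_det_fromBlocks (X : Matrix I I (Matrix (J ⊕ L) (J ⊕ L) K)) :
    (comp I I _ _ K X).det =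
      (fromBlocks (comp I I J J K (X.map toBlocks₁₁)) (comp I I J L K (X.map toBlocks₁₂))
        (comp I I L J K (X.map toBlocks₂₁)) (comp I I L L K (X.map toBlocks₂₂))).det := by
  rw [← det_submatrix_equiv_self (Equiv.prodSumDistrib I J L)]
  congr 1
  ext ⟨i, a⟩ ⟨j, b⟩
  rcases a with a | a <;> rcases b with b | b <;> rfl

end BlockMatrices

theorem fin_le_neg_one {n : ℕ} [NeZero n] (k : Fin n) : k ≤ -1 := by
  obtain ⟨m, rfl⟩ := Nat.exists_eq_succ_of_ne_zero (NeZero.ne n)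
  rw [← Fin.neg_last, neg_neg]
  exact k.le_last

/-- The weighted cyclic shift `(S u)_p = w_p u_{p-1}` on sequences indexed by `Fin n`, whose
subtraction wraps around: the index `0` of `Fin n` also plays the role of `n`. -/
def weightedCyclicShift {n : ℕ} [NeZero n] {R : Type*} [Zero R] (w : Fin n → R) :
    Matrix (Fin n) (Fin n) R :=
  of fun p q => if q = p - 1 then w p else 0

section WeightedCyclicShift

variable {n : ℕ} [NeZero n]

theorem weightedCyclicShift_apply {R : Type*} [Zero R] (w : Fin n → R) (p q : Fin n) :
    weightedCyclicShift w p q = if q = p - 1 then w p else 0 := rfl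

theorem weightedCyclicShift_zero {R : Type*} [Zero R] :
    weightedCyclicShift (fun _ : Fin n => (0 : R)) = 0 := by
  ext p q
  simp [weightedCyclicShift_apply]

theorem neg_weightedCyclicShift {R : Type*} [NegZeroClass R] (w : Fin n → R) :
    -weightedCyclicShift w = weightedCyclicShift (-w) := by
  ext p q
  simp only [Matrix.neg_apply, weightedCyclicShift_apply, Pi.neg_apply]
  split_ifs <;> simp

theorem weightedCyclicShift_map {R S : Type*} [Zero R] [Zero S] (w : Fin n → R) {f : R → S}
    (hf : f 0 = 0) : (weightedCyclicShift w).map f = weightedCyclicShift fun k => f (w k) := by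
  ext1 p q
  simp only [map_apply, weightedCyclicShift_apply, apply_ite f, hf]

section Semiring

variable {R : Type*} [NonUnitalNonAssocSemiring R]

theorem diagonal_mul_weightedCyclicShift (d w : Fin n → R) :
    diagonal d * weightedCyclicShift w = weightedCyclicShift (d * w) := by
  ext p q
  simp [diagonal_mul, weightedCyclicShift_apply]

theorem weightedCyclicShift_mulVec (w v : Fin n → R) :
    weightedCyclicShift w *ᵥ v = fun p => w p * v (p - 1) := by
  ext p
  simp [mulVec, dotProduct, weightedCyclicShift_apply]

theorem transpose_weightedCyclicShift_mul (v w : Fin n → R) :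
    (weightedCyclicShift v)ᵀ * weightedCyclicShift w =
      diagonal fun k => v (k + 1) * w (k + 1) := by
  ext p q
  by_cases hpq : p = q
  · subst hpq
    simp [mul_apply, weightedCyclicShift_apply, eq_sub_iff_add_eq]
  · simp [mul_apply, weightedCyclicShift_apply, eq_sub_iff_add_eq, hpq]

end Semiring

theorem weightedCyclicShift_apply_eq_zero_of_le {R : Type*} [Zero R] {w : Fin n → R} (hw : w 0 = 0)
    {p q : Fin n} (hpq : p ≤ q) : weightedCyclicShift w p q = 0 := by
  rw [weightedCyclicShift_apply, ite_eq_right_iff]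
  rintro rfl
  by_cases hp : p = 0
  · rw [hp, hw]
  · have := Fin.val_sub_one_of_ne_zero hp
    have := Fin.val_ne_zero_iff.mpr hp
    omega

theorem weightedCyclicShift_eq_update_add_single {R : Type*} [AddZeroClass R] (T : Fin n → R) :
    weightedCyclicShift T =
      weightedCyclicShift (Function.update T 0 0) + single 0 (-1) (T 0) := by
  ext p q
  by_cases hp : p = 0
  · subst hp
    simp [weightedCyclicShift_apply, single_apply, eq_comm]
  · simp [weightedCyclicShift_apply, hp, Ne.symm hp]

theorem one_sub_weightedCyclicShift_eq_mul {R : Type*} [Ring R] {T Q : Fin n → R} (hQ₀ : Q 0 = 1)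
    (hQ : ∀ k, k ≠ 0 → Q k = T k * Q (k - 1)) :
    1 - weightedCyclicShift T =
      (1 - weightedCyclicShift (Function.update T 0 0)) *
        (1 - vecMulVec Q (Pi.single (-1) (T 0))) := by
  have hcol : (1 - weightedCyclicShift (Function.update T 0 0)) *ᵥ Q = Pi.single 0 1 := by
    rw [sub_mulVec, one_mulVec, weightedCyclicShift_mulVec]
    ext p
    by_cases hp : p = 0
    · simp [hp, hQ₀]
    · simp [hp, ← hQ p hp]
  have hcorner : vecMulVec (Pi.single 0 1) (Pi.single (-1) (T 0)) =
      single (0 : Fin n) (-1 : Fin n) (T 0) := by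
    ext p q
    by_cases hp : p = 0 <;> simp [vecMulVec_apply, single_apply, Pi.single_apply, hp, eq_comm]
  rw [mul_sub, mul_one, mul_vecMulVec, hcol, hcorner, sub_sub,
    ← weightedCyclicShift_eq_update_add_single]

variable {K ι : Type*} [CommRing K] [Fintype ι] [DecidableEq ι]

theorem det_weightedCyclicShift (w : Fin n → K) :
    (weightedCyclicShift w).det = (-1) ^ (n + 1) * ∏ k, w k := by
  have hfac : weightedCyclicShift w =
      diagonal w * ((finRotate n)⁻¹ : Equiv.Perm (Fin n)).permMatrix K := by
    ext p q
    simp [weightedCyclicShift_apply, PEquiv.toMatrix_apply, diagonal_mul, eq_comm]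
  obtain ⟨k, rfl⟩ := Nat.exists_eq_succ_of_ne_zero (NeZero.ne n)
  rw [hfac, det_mul, det_diagonal, det_permutation, Equiv.Perm.sign_inv, sign_finRotate, mul_comm]
  simp [pow_succ]

theorem det_comp_weightedCyclicShift_smul_one (w : Fin n → K) :
    (comp _ _ ι ι K (weightedCyclicShift fun k => w k • 1)).det =
      ((-1) ^ (n + 1) * ∏ k, w k) ^ Fintype.card ι := by
  have hmap : weightedCyclicShift (fun k => w k • (1 : Matrix ι ι K)) =
      (weightedCyclicShift w).map (algebraMap K (Matrix ι ι K)) := by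
    simp only [weightedCyclicShift_map _ (map_zero _), Algebra.algebraMap_eq_smul_one]
  rw [hmap, ← det_det, det_weightedCyclicShift, Algebra.algebraMap_eq_smul_one, det_smul, det_one,
    mul_one]

theorem det_comp_one_sub_weightedCyclicShift {T Q : Fin n → Matrix ι ι K} (hQ₀ : Q 0 = 1)
    (hQ : ∀ k, k ≠ 0 → Q k = T k * Q (k - 1)) :
    (comp _ _ ι ι K (1 - weightedCyclicShift T)).det = (1 - T 0 * Q (-1)).det := by
  have hlower : (comp _ _ ι ι K (1 - weightedCyclicShift (Function.update T 0 0))).det = 1 := by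
    have hzero {p q : Fin n} (h : p ≤ q) :
        weightedCyclicShift (Function.update T 0 0) p q = 0 :=
      weightedCyclicShift_apply_eq_zero_of_le (Function.update_self ..) h
    have htri : (weightedCyclicShift (Function.update T 0 0)).BlockTriangular
        (OrderDual.toDual : Fin n ≃ (Fin n)ᵒᵈ) := fun p q h => hzero h.le
    rw [det_comp_of_blockTriangular _ (blockTriangular_one.sub htri)]
    exact Finset.prod_eq_one fun p _ => by simp [hzero le_rfl]
  have hupper : (comp _ _ ι ι K (1 - vecMulVec Q (Pi.single (-1) (T 0)))).det =
      (1 - Q (-1) * T 0).det := by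
    have htri : (vecMulVec Q (Pi.single (-1) (T 0))).BlockTriangular (Equiv.refl (Fin n)) := by
      intro p q (hqp : q < p)
      have hq : q ≠ -1 := fun h => (hqp.trans_le (fin_le_neg_one p)).ne h
      simp [vecMulVec_apply, hq]
    rw [det_comp_of_blockTriangular _ (blockTriangular_one.sub htri),
      Fintype.prod_eq_single (-1) fun p hp => by simp [vecMulVec_apply, hp]]
    simp [vecMulVec_apply]
  rw [one_sub_weightedCyclicShift_eq_mul hQ₀ hQ, ← compRingEquiv_apply, map_mul, det_mul,
    compRingEquiv_apply, compRingEquiv_apply, hlower, hupper, one_mul, det_one_sub_mul_comm]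

theorem det_comp_one_sub_weightedCyclicShift_fromBlocks (C D E : Fin n → Matrix ι ι K) :
    (comp _ _ _ _ K (1 - weightedCyclicShift fun k => fromBlocks 0 (E k) (C k) (D k))).det =
      (comp _ _ _ _ K
        (1 - weightedCyclicShift D - weightedCyclicShift C * weightedCyclicShift E)).det := by
  set M := weightedCyclicShift fun k => fromBlocks 0 (E k) (C k) (D k)
  have hmap (f : Matrix (ι ⊕ ι) (ι ⊕ ι) K → Matrix ι ι K) (hf₀ : f 0 = 0)
      (hf : ∀ X Y, f (X - Y) = f X - f Y) :
      (1 - M).map f = diagonal (fun _ => f (fromBlocks 1 0 0 1)) -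
        weightedCyclicShift fun k => f (fromBlocks 0 (E k) (C k) (D k)) := by
    rw [Matrix.map_sub f hf, weightedCyclicShift_map _ hf₀, ← diagonal_one, diagonal_map hf₀,
      fromBlocks_one]
  have h₁₁ : (1 - M).map toBlocks₁₁ = 1 := by
    simp [hmap toBlocks₁₁ rfl fun _ _ => rfl, -fromBlocks_one, weightedCyclicShift_zero]
  have h₁₂ : (1 - M).map toBlocks₁₂ = -weightedCyclicShift E := by
    simp [hmap toBlocks₁₂ rfl fun _ _ => rfl, -fromBlocks_one]
  have h₂₁ : (1 - M).map toBlocks₂₁ = -weightedCyclicShift C := by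
    simp [hmap toBlocks₂₁ rfl fun _ _ => rfl, -fromBlocks_one]
  have h₂₂ : (1 - M).map toBlocks₂₂ = 1 - weightedCyclicShift D := by
    simp [hmap toBlocks₂₂ rfl fun _ _ => rfl, -fromBlocks_one]
  rw [det_comp_eq_det_fromBlocks, h₁₁, h₁₂, h₂₁, h₂₂]
  simp only [← compRingEquiv_apply, map_one, det_fromBlocks_one₁₁, ← map_mul, ← map_sub,
    neg_mul_neg]

theorem cyclicTridiagonal_mul_weightedCyclicShift {A B C : Fin n → Matrix ι ι K} {σ τ : Fin n → K}
    (hB : ∀ k, IsUnit (B k).det) (hστ : ∀ k, σ k * τ k = 1) :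
    (diagonal A - weightedCyclicShift (fun k => σ k • C k) -
        (weightedCyclicShift fun k => τ k • B (k - 1))ᵀ) *
          weightedCyclicShift (fun k => -σ k • 1) =
      diagonal B * (1 - weightedCyclicShift (fun k => σ k • ((B k)⁻¹ * A k)) -
        weightedCyclicShift (fun k => σ k • -((B k)⁻¹ * C k)) *
          weightedCyclicShift (fun k => σ k • 1)) := by
  have hcancel (k : Fin n) (X : Matrix ι ι K) : B k * ((B k)⁻¹ * X) = X :=
    mul_nonsing_inv_cancel_left _ _ (hB k)
  have hneg (X : Fin n → Matrix ι ι K) : weightedCyclicShift (fun k => -X k) =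
      -weightedCyclicShift X := (neg_weightedCyclicShift X).symm
  simp only [neg_smul, smul_neg, hneg, mul_sub, sub_mul, mul_neg, neg_mul, mul_one, ← mul_assoc,
    diagonal_mul_weightedCyclicShift, transpose_weightedCyclicShift_mul, Pi.mul_def, mul_smul_comm,
    add_sub_cancel_right, smul_smul, hστ, hcancel, one_smul]
  abel

-- The weights `σ` encode the Floquet condition `u_{k+n} = ρ u_k`, with multiplier `ρ = (∏ σ)⁻¹`.
theorem hill_formula {A B C : Fin n → Matrix ι ι K} {σ τ : Fin n → K}
    (hB : ∀ k, IsUnit (B k).det) (hστ : ∀ k, σ k * τ k = 1) :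
    (∏ k, (B k).det) * (comp _ _ _ _ K (1 - weightedCyclicShift fun k =>
        σ k • fromBlocks 0 1 (-((B k)⁻¹ * C k)) ((B k)⁻¹ * A k))).det =
      (comp _ _ _ _ K (diagonal A - weightedCyclicShift (fun k => σ k • C k) -
        (weightedCyclicShift fun k => τ k • B (k - 1))ᵀ)).det * (-∏ k, σ k) ^ Fintype.card ι := by
  have hdiag : (comp _ _ _ _ K (diagonal B)).det = ∏ k, (B k).det := by
    simpa using det_comp_of_blockTriangular (Equiv.refl (Fin n)) (blockTriangular_diagonal B)
  have hshift : (comp _ _ ι ι K (weightedCyclicShift fun k => -σ k • 1)).det =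
      (-∏ k, σ k) ^ Fintype.card ι := by
    rw [det_comp_weightedCyclicShift_smul_one, Finset.prod_neg]
    simp [pow_succ, ← mul_assoc, ← mul_pow]
  rw [← hdiag, ← hshift, ← det_mul]
  simp only [← compRingEquiv_apply, ← map_mul, cyclicTridiagonal_mul_weightedCyclicShift hB hστ]
  rw [map_mul, det_mul]
  simp only [fromBlocks_smul, smul_zero, compRingEquiv_apply,
    det_comp_one_sub_weightedCyclicShift_fromBlocks]

end WeightedCyclicShift

section MorseIndex

variable {N : Type*} [Fintype N] [DecidableEq N] {Q : Matrix N N ℝ}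

theorem matIndex_eq_sigNeg (Q : Matrix N N ℝ) : matIndex Q = sigNeg Q.toQuadraticForm' := by
  rw [matIndex, ← (sigNeg_isGreatest Q.toQuadraticForm').csSup_eq]
  simp [QuadraticMap.PosDef, toQuadraticForm', toLinearMap₂'_apply']

theorem toQuadraticForm'_equivalent_weightedSumSquares_eigenvalues (hQ : Q.IsHermitian) :
    Q.toQuadraticForm'.Equivalent (QuadraticMap.weightedSumSquares ℝ hQ.eigenvalues) := by
  let U : Matrix N N ℝ := hQ.eigenvectorUnitary.1
  have hdiag : Uᵀ * Q * U = diagonal hQ.eigenvalues := by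
    simpa [Unitary.conjStarAlgAut_apply, star_eq_conjTranspose] using
      hQ.conjStarAlgAut_star_eigenvectorUnitary
  refine .symm ⟨⟨UnitaryGroup.toLinearEquiv hQ.eigenvectorUnitary, fun x => ?_⟩⟩
  calc Q.toQuadraticForm' (U *ᵥ x) = x ⬝ᵥ (Uᵀ * Q * U) *ᵥ x := by
        simp [toQuadraticForm', toLinearMap₂'_apply', dotProduct_mulVec, vecMul_mulVec,
          ← mulVec_mulVec]
    _ = QuadraticMap.weightedSumSquares ℝ hQ.eigenvalues x := by
        simp [hdiag, QuadraticMap.weightedSumSquares_apply, dotProduct, mulVec_diagonal,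
          mul_left_comm]

theorem matIndex_eq_card_neg_eigenvalues (hQ : Q.IsHermitian) :
    matIndex Q = Finset.card {i | hQ.eigenvalues i < 0} := by
  rw [matIndex_eq_sigNeg, QuadraticForm.sigNeg_of_equiv_weightedSumSquares
    (toQuadraticForm'_equivalent_weightedSumSquares_eigenvalues hQ), Set.ncard_eq_toFinset_card']
  simp

theorem det_mul_neg_one_pow_matIndex_pos (hQ : Q.IsHermitian) (hdet : IsUnit Q.det) :
    0 < Q.det * (-1) ^ matIndex Q := by
  have hdet_eq : Q.det = ∏ i, hQ.eigenvalues i := by simpa using hQ.det_eq_prod_eigenvalues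
  have hsign : (-1 : ℝ) ^ matIndex Q = ∏ i, if hQ.eigenvalues i < 0 then -1 else 1 := by
    rw [matIndex_eq_card_neg_eigenvalues hQ, Finset.prod_ite, Finset.prod_const,
      Finset.prod_const_one, mul_one]
  have hne (i : N) : hQ.eigenvalues i ≠ 0 :=
    Finset.prod_ne_zero_iff.mp (hdet_eq ▸ hdet.ne_zero) i (Finset.mem_univ i)
  rw [hdet_eq, hsign, ← Finset.prod_mul_distrib]
  refine Finset.prod_pos fun i _ => ?_
  split_ifs with hi
  · linarith
  · linarith [(not_lt.mp hi).lt_of_ne' (hne i)]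

end MorseIndex

theorem exists_isRoot_gt_of_eval_neg {p : Polynomial ℝ} (hp : p.Monic) {c : ℝ}
    (hc : p.eval c < 0) : ∃ μ > c, p.IsRoot μ := by
  have hdeg : 0 < p.degree := by
    refine Polynomial.degree_pos_of_ne_zero_of_nonunit hp.ne_zero fun hu => ?_
    rw [hp.eq_one_of_isUnit hu, Polynomial.eval_one] at hc
    linarith
  have htop := p.tendsto_atTop_of_leadingCoeff_nonneg hdeg (hp.leadingCoeff ▸ zero_le_one)
  exact intermediate_value_Ioi p.continuous.continuousOn htop hc

theorem exists_lt_det_sub_smul_one_eq_zero {N : Type*} [Fintype N] [DecidableEq N]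
    {P : Matrix N N ℝ} {c : ℝ} (hP : (P - c • 1).det < 0) :
    ∃ ρ : ℝ, ρ < c ∧ (P - ρ • 1).det = 0 := by
  have heval (t : ℝ) : (-P).charpoly.eval (-t) = (P - t • 1).det := by
    rw [eval_charpoly, sub_neg_eq_add, add_comm, scalar_apply, ← smul_one_eq_diagonal, neg_smul,
      sub_eq_add_neg]
  obtain ⟨μ, hμ, hroot⟩ := exists_isRoot_gt_of_eval_neg (charpoly_monic (-P)) (heval c ▸ hP)
  refine ⟨-μ, neg_lt.mp hμ, ?_⟩
  rw [← heval, neg_neg, hroot]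

/-- The weights which turn the cyclic shift into the antiperiodic one, `u_0 = -u_n`: the sign sits
at the wrap-around index `0`, which plays the role of `n`. -/
def antiperiodicSign {n : ℕ} [NeZero n] (k : Fin n) : ℝ := if k = 0 then -1 else 1

theorem antiperiodicSign_mul_self {n : ℕ} [NeZero n] (k : Fin n) :
    antiperiodicSign k * antiperiodicSign k = 1 := by
  unfold antiperiodicSign
  split_ifs <;> norm_num

theorem prod_antiperiodicSign (n : ℕ) [NeZero n] : ∏ k : Fin n, antiperiodicSign k = -1 := by
  simp [antiperiodicSign]

theorem periodic_apply_val_sub_one {X : Type*} {n : ℕ} [NeZero n] {f : ℤ → X}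
    (hf : Function.Periodic f n) (k : Fin n) : f ((k - 1 : Fin n) : ℕ) = f ((k : ℕ) - 1) := by
  by_cases hk : k = 0
  · obtain ⟨m, rfl⟩ := Nat.exists_eq_succ_of_ne_zero (NeZero.ne n)
    rw [hk, ← hf ((0 : Fin _) - 1 : ℤ)]
    simp
  · have h := Fin.val_sub_one_of_ne_zero hk
    have h' := Fin.val_ne_zero_iff.mpr hk
    congr 1
    omega

section LagrangianSystem

variable {m n : ℕ} {A B : ℤ → Matrix (Fin m) (Fin m) ℝ}

theorem transferMatrix_periodic (hA : Function.Periodic A n) (hB : Function.Periodic B n) :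
    Function.Periodic (transferMatrix m A B) n := by
  intro i
  rw [transferMatrix, add_sub_right_comm, hA, hB, hB, transferMatrix]

theorem monodromy_zero : monodromy m 0 A B = 1 := rfl

theorem monodromy_succ (k : ℕ) :
    monodromy m (k + 1) A B = transferMatrix m A B (k + 1) * monodromy m k A B := by
  simp [monodromy, List.range_succ]

variable [NeZero n]

theorem det_comp_one_sub_antiperiodic_transferMatrix (hA : Function.Periodic A n)
    (hB : Function.Periodic B n) :
    (comp _ _ _ _ ℝ (1 - weightedCyclicShift fun k : Fin n =>
      antiperiodicSign k • transferMatrix m A B (k : ℕ))).det = (monodromy m n A B + 1).det := by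
  rw [det_comp_one_sub_weightedCyclicShift (Q := fun k : Fin n => monodromy m k A B)]
  · obtain ⟨k, rfl⟩ := Nat.exists_eq_succ_of_ne_zero (NeZero.ne n)
    have hT : transferMatrix m A B 0 = transferMatrix m A B (k + 1) := by
      simpa using (transferMatrix_periodic hA hB 0).symm
    simp [antiperiodicSign, hT, monodromy_succ, add_comm]
  · simp [monodromy_zero]
  · intro k hk
    have hpred := Fin.val_sub_one_of_ne_zero hk
    have hsucc : (k : ℕ) = ((k - 1 : Fin n) : ℕ) + 1 := by
      have := Fin.val_ne_zero_iff.mpr hk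
      omega
    calc monodromy m k A B
        = transferMatrix m A B ((k - 1 : Fin n) + 1 : ℕ) * monodromy m (k - 1 : Fin n) A B := by
          rw [Nat.cast_succ, ← monodromy_succ, ← hsucc]
      _ = antiperiodicSign k • transferMatrix m A B (k : ℕ) * monodromy m (k - 1 : Fin n) A B := by
          rw [← hsucc, antiperiodicSign, if_neg hk, one_smul]

theorem hessianNeg_eq_comp (A B : ℤ → Matrix (Fin m) (Fin m) ℝ) :
    hessianNeg m n A B = comp _ _ _ _ ℝ
      (diagonal (fun k : Fin n => A (k : ℕ))
        - weightedCyclicShift (fun k => antiperiodicSign k • B ((k : ℕ) - 1))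
        - (weightedCyclicShift fun k => antiperiodicSign k • (B ((k - 1 : Fin n) : ℕ))ᵀ)ᵀ) := by
  have hsign (k : Fin n) : antiperiodicSign (k + 1) = if (k : ℕ) = n - 1 then -1 else 1 := by
    obtain ⟨l, rfl⟩ := Nat.exists_eq_succ_of_ne_zero (NeZero.ne n)
    simp only [antiperiodicSign, add_eq_zero_iff_eq_neg, ← Fin.neg_last, neg_neg, Fin.ext_iff,
      Fin.val_last, Nat.succ_sub_one]
  ext ⟨p, a⟩ ⟨q, b⟩
  have hnext : p = q - 1 ↔ q = p + 1 := by rw [eq_sub_iff_add_eq, eq_comm]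
  simp only [hessianNeg, comp_apply, Matrix.sub_apply, diagonal_apply, weightedCyclicShift_apply,
    transpose_apply, hnext, ← hsign]
  have hprev : (if (p : ℕ) = 0 then (-1 : ℝ) else 1) = antiperiodicSign p := by
    simp only [antiperiodicSign, Fin.val_eq_zero_iff]
  simp only [hprev, eq_comm (a := p) (b := q)]
  by_cases hq : q = p + 1
  · subst hq
    simp only [add_sub_cancel_right]
    split_ifs <;> simp [sub_eq_add_neg]
  · split_ifs <;> simp [sub_eq_add_neg]

theorem hessianNeg_isSymm (hB : Function.Periodic B n) (hA : ∀ i, (A i).IsSymm) :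
    (hessianNeg m n A B).IsSymm := by
  rw [hessianNeg_eq_comp, isSymm_comp_iff]
  have hB' (k : Fin n) := periodic_apply_val_sub_one hB k
  set D := diagonal fun k : Fin n => A (k : ℕ)
  set S := weightedCyclicShift fun k : Fin n => antiperiodicSign k • B ((k : ℕ) - 1)
  have hD : Dᵀ = D.map (·ᵀ) := by
    simp only [D, diagonal_transpose, diagonal_map transpose_zero, (hA _).eq]
  have hS : (weightedCyclicShift fun k : Fin n =>
      antiperiodicSign k • (B ((k - 1 : Fin n) : ℕ))ᵀ) = S.map (·ᵀ) := by
    simp only [S, weightedCyclicShift_map _ transpose_zero, transpose_smul, hB']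
  rw [hS, transpose_sub, transpose_sub, hD]
  ext1 p q
  simp [sub_right_comm]

theorem prod_det_mul_det_monodromy_add_one (hA : Function.Periodic A n)
    (hB : Function.Periodic B n) (hBinv : ∀ i, IsUnit (B i).det) :
    (∏ i : Fin n, (B (i : ℕ)).det) * (monodromy m n A B + 1).det = (hessianNeg m n A B).det := by
  have h := hill_formula (A := fun k : Fin n => A (k : ℕ)) (B := fun k : Fin n => (B (k : ℕ))ᵀ)
    (C := fun k => B ((k : ℕ) - 1)) (fun k => isUnit_det_transpose _ (hBinv k))
    antiperiodicSign_mul_self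
  rw [← hessianNeg_eq_comp, prod_antiperiodicSign, neg_neg, one_pow, mul_one] at h
  rw [← h, ← det_comp_one_sub_antiperiodic_transferMatrix hA hB]
  simp only [det_transpose, transferMatrix]

end LagrangianSystem

/-- `H₋₁` is symmetric, and if it is invertible with
`σ · (-1)^{ind H₋₁} < 0` (where `σ = sign ∏ det B_i`), then the monodromy matrix
has a real eigenvalue `ρ < -1`. -/
theorem hessianNeg_symm_and_instability (m n : ℕ) (hm : 0 < m) [NeZero n]
    (A B : ℤ → Matrix (Fin m) (Fin m) ℝ)
    (hAper : ∀ i, A (i + n) = A i) (hBper : ∀ i, B (i + n) = B i)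
    (hAsym : ∀ i, (A i)ᵀ = A i) (hBinv : ∀ i, IsUnit (B i).det) :
    (hessianNeg m n A B)ᵀ = hessianNeg m n A B ∧
    (IsUnit (hessianNeg m n A B).det →
      Real.sign (∏ i : Fin n, (B ((i : ℕ) : ℤ)).det) *
        (-1 : ℝ) ^ (matIndex (hessianNeg m n A B)) < 0 →
      ∃ ρ : ℝ, ρ < -1 ∧ (monodromy m n A B - ρ • 1).det = 0) := by
  have hsymm : (hessianNeg m n A B).IsSymm := hessianNeg_isSymm hBper hAsym
  refine ⟨hsymm, fun hunit hsign => exists_lt_det_sub_smul_one_eq_zero ?_⟩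
  rw [neg_one_smul, sub_neg_eq_add]
  set b := ∏ i : Fin n, (B ((i : ℕ) : ℤ)).det
  set ε := (-1 : ℝ) ^ matIndex (hessianNeg m n A B)
  have hhill : b * (monodromy m n A B + 1).det = (hessianNeg m n A B).det :=
    prod_det_mul_det_monodromy_add_one hAper hBper hBinv
  have hindex : 0 < (hessianNeg m n A B).det * ε :=
    det_mul_neg_one_pow_matIndex_pos (isHermitian_iff_isSymm.mpr hsymm) hunit
  have hε : ε * ε = 1 := by rw [← mul_pow, neg_one_mul, neg_neg, one_pow]
  refine neg_of_mul_neg_right ?_ (Real.sign_mul_nonneg b)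
  calc b.sign * b * (monodromy m n A B + 1).det
      = b.sign * ε * ((hessianNeg m n A B).det * ε) := by
        linear_combination b.sign * hhill - b.sign * (hessianNeg m n A B).det * hε
    _ < 0 := mul_neg_of_neg_of_pos hsign hindex
end
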